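/- arXiv:1910.14348 — 5 statements merged into one kernel-verified Lean document; each statement's English description precedes it below -/
import Mathlib

section
/- For every s ≥ 0, the pushforward of μ under the time-t flow map concentrates on Λ_s: lim_{t→∞} μ({x ∈ X : φ_t(x) ∈ Λ_s}) = 1, where Λ_s := ⋂_{0 ≤ r ≤ s} φ_r(U). -/
open Set Filter MeasureTheory

/-!
Since `U` is forward invariant, `φ_t(x) ∈ Λ_s` holds exactly when `φ_{t-s}(x) ∈ U`: membership in
`φ_r(U)` means `φ_{t-r}(x) ∈ U`, and the case `r = s` implies all the others. Hence the sets
`{x | φ_t(x) ∈ Λ_s}` increase with `t`, and they exhaust `X` because every point enters `U`.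
Continuity of `μ` from below gives the limit `μ(X) = 1`.
-/

/-- Asymptotic concentration on the attractor: for a continuous flow `φ` with a bounded
open trapping region `U` (with `closure (φ_t(U)) ⊆ U` for `t > 0`) such that every point
eventually enters `U`, and any Borel probability measure `μ`, the pushforward of `μ`
under `φ_t` concentrates on `Λ_s := ⋂_{0 ≤ r ≤ s} φ_r(U)`:
`lim_{t→∞} μ({x : φ_t(x) ∈ Λ_s}) = 1` for every `s ≥ 0`. -/
theorem pushforward_concentrates_on_attractor
    {X : Type*} [MetricSpace X] [MeasurableSpace X] [BorelSpace X]
    (φ : ℝ → X → X)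
    (hcont : Continuous fun p : ℝ × X => φ p.1 p.2)
    (hzero : φ 0 = id)
    (hadd : ∀ t s : ℝ, φ (t + s) = φ t ∘ φ s)
    (hhomeo : ∀ t : ℝ, IsHomeomorph (φ t))
    (U : Set X) (hUopen : IsOpen U) (hUbdd : Bornology.IsBounded U)
    (htrap : ∀ t : ℝ, 0 < t → closure (φ t '' U) ⊆ U)
    (henter : ∀ x : X, ∃ t : ℝ, 0 ≤ t ∧ φ t x ∈ U)
    (μ : Measure X) [IsProbabilityMeasure μ] :
    ∀ s : ℝ, 0 ≤ s →
      Tendsto (fun t : ℝ => μ {x : X | φ t x ∈ ⋂ r ∈ Set.Icc (0 : ℝ) s, φ r '' U})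
        atTop (nhds 1) := by
  intro s hs
  have hinv : ∀ a b : ℝ, a ≤ b → ∀ x, φ a x ∈ U → φ b x ∈ U := by
    intro a b hab x hx
    rcases hab.eq_or_lt with rfl | hlt
    · exact hx
    · apply htrap (b - a) (sub_pos.2 hlt)
      refine subset_closure ⟨φ a x, hx, ?_⟩
      rw [← Function.comp_apply (f := φ (b - a)), ← hadd, sub_add_cancel]
  have hset : ∀ t : ℝ, {x : X | φ t x ∈ ⋂ r ∈ Set.Icc (0 : ℝ) s, φ r '' U} =
      {x | φ (t - s) x ∈ U} := by
    intro t
    have hsplit : ∀ r x, φ r (φ (t - r) x) = φ t x := by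
      intro r x
      rw [← Function.comp_apply (f := φ r), ← hadd, add_sub_cancel]
    ext x
    simp only [mem_setOf_eq, mem_iInter]
    constructor
    · intro h
      obtain ⟨y, hy, hyx⟩ := h s ⟨hs, le_rfl⟩
      rw [← hsplit s x] at hyx
      exact (hhomeo s).injective hyx ▸ hy
    · intro h r hr
      exact ⟨φ (t - r) x, hinv (t - s) (t - r) (by linarith [hr.2]) x h, hsplit r x⟩
  simp only [hset]
  have hmono : Monotone fun t : ℝ => {x : X | φ (t - s) x ∈ U} :=
    fun a b hab x hx => hinv (a - s) (b - s) (by linarith) x hx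
  have hunion : ⋃ t : ℝ, {x : X | φ (t - s) x ∈ U} = univ := by
    refine eq_univ_of_forall fun x => ?_
    obtain ⟨t, -, ht⟩ := henter x
    exact mem_iUnion.2 ⟨t + s, by simpa using ht⟩
  have hlim := tendsto_measure_iUnion_atTop (μ := μ) hmono
  rw [hunion, measure_univ] at hlim
  exact hlim
end

section
/- If in addition X is separable and there exists S ≥ 0 such that every point of supp(μ) enters U by time S (i.e., for each x ∈ supp(μ) there is r ∈ [0, S] with φ_r(x) ∈ U), then μ({x ∈ X : φ_t(x) ∈ U}) = 1 for every t ≥ S; that is, the pushforward of μ under the flow is entirely supported on U after the finite time S. -/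
/-!
A separable metric space is hereditarily Lindelöf, so the support of `μ` is conull. A point `x` of
the support satisfies `φ r x ∈ U` for some `r ≤ S ≤ t`, and `φ t x = φ (t - r) (φ r x)` stays in `U`
because `U` is forward invariant. Hence `φ t x ∈ U` for `μ`-almost every `x`.
-/

open Set Filter MeasureTheory

/-- The topological support of a Borel measure: the set of points all of whose open
neighbourhoods have positive measure. -/
def measSupport {X : Type*} [TopologicalSpace X] [MeasurableSpace X]
    (μ : Measure X) : Set X :=
  {x | ∀ V : Set X, IsOpen V → x ∈ V → 0 < μ V}

/-- If `X` is separable and every point of the support of `μ` enters the trapping region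
`U` by some finite time `S`, then for every `t ≥ S` the pushforward of `μ` under `φ_t`
is entirely supported on `U`: `μ({x : φ_t(x) ∈ U}) = 1`. -/
theorem pushforward_supported_on_U_after_finite_time
    {X : Type*} [MetricSpace X] [TopologicalSpace.SeparableSpace X]
    [MeasurableSpace X] [BorelSpace X]
    (φ : ℝ → X → X)
    (hcont : Continuous fun p : ℝ × X => φ p.1 p.2)
    (hzero : φ 0 = id)
    (hadd : ∀ t s : ℝ, φ (t + s) = φ t ∘ φ s)
    (hhomeo : ∀ t : ℝ, IsHomeomorph (φ t))
    (U : Set X) (hUopen : IsOpen U) (hUbdd : Bornology.IsBounded U)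
    (htrap : ∀ t : ℝ, 0 < t → closure (φ t '' U) ⊆ U)
    (μ : Measure X) [IsProbabilityMeasure μ]
    (S : ℝ) (hS : 0 ≤ S)
    (henter : ∀ x ∈ measSupport μ, ∃ r : ℝ, r ∈ Set.Icc 0 S ∧ φ r x ∈ U) :
    ∀ t : ℝ, S ≤ t → μ {x : X | φ t x ∈ U} = 1 := by
  intro t ht
  have : SecondCountableTopology X := UniformSpace.secondCountable_of_separable X
  have hae : ∀ᵐ x ∂μ, φ t x ∈ U := by
    filter_upwards [Measure.support_mem_ae (μ := μ)] with x hx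
    have hx' : x ∈ measSupport μ := fun V hV hxV =>
      (Measure.mem_support_iff_forall x).1 hx V (hV.mem_nhds hxV)
    obtain ⟨r, hr, hrU⟩ := henter x hx'
    have hflow : φ t x = φ (t - r) (φ r x) := by
      rw [← Function.comp_apply (f := φ (t - r)), ← hadd, sub_add_cancel]
    rw [hflow]
    -- `htrap` says nothing at time zero, so `r = t` is treated separately.
    rcases (hr.2.trans ht).eq_or_lt with rfl | hlt
    · simpa [hzero] using hrU
    · exact htrap _ (sub_pos.2 hlt) (subset_closure (mem_image_of_mem _ hrU))
  simpa using prob_compl_eq_zero_iff₀ (μ := μ) (s := {x | φ t x ∈ U})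
    (hUopen.preimage (hhomeo t).continuous).measurableSet.nullMeasurableSet |>.1 hae
end

section
/- Lower Lipschitz bound for dissipative quadratic ODEs: under the stated hypotheses, for every τ ≥ 0, ‖x(τ) − y(τ)‖ ≥ exp(−(‖A‖ + 2·H·R_U)·τ) · ‖x(0) − y(0)‖, where ‖A‖ is the operator norm of A. Equivalently, the squared difference e(t) := x(t) − y(t) satisfies the differential inequality (d/dt)‖e(t)‖² ≥ −(2‖A‖ + 4·H·R_U)‖e(t)‖², which integrates to the stated bound. -/
/-!
Let `e = x - y` and `K = ‖A‖ + 2 * H * R_U`. Expanding `B y y` at `y = x - e` gives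
`e' = -A e - 2 B(x, e) + B(e, e)`. The only term not controlled by `‖e‖²`, namely `⟪e, B(e, e)⟫`,
vanishes, so `⟪e, e'⟫ ≥ -K ‖e‖²` (`inner_sub_vectorField_ge`). Hence `exp (2 K t) * ‖e t‖ ^ 2` has
nonnegative derivative and is monotone on `[0, τ]`; comparing its values at the endpoints and taking
square roots gives the bound. No bound on `y` is needed, as `B` is only expanded around `x`.
-/

open Set
open scoped RealInnerProductSpace

/-- One-sided expansion estimate for the vector field `u ↦ f - A u - B u u`: the lower bound on
`⟪e, e'⟫` depends only on the size of the first point `u`. -/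
lemma inner_sub_vectorField_ge {E : Type*} [NormedAddCommGroup E] [InnerProductSpace ℝ E]
    (A : E →L[ℝ] E) (B : E →ₗ[ℝ] E →ₗ[ℝ] E) {H R : ℝ} (hH : 0 ≤ H)
    (hBsymm : ∀ u v : E, B u v = B v u)
    (hBorth : ∀ u : E, ⟪u, B u u⟫ = 0)
    (hBbound : ∀ u v w : E, |⟪u, B v w⟫| ≤ H * ‖u‖ * ‖v‖ * ‖w‖)
    (f u v : E) (hu : ‖u‖ ≤ R) :
    -(‖A‖ + 2 * H * R) * ‖u - v‖ ^ 2 ≤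
      ⟪u - v, (f - A u - B u u) - (f - A v - B v v)⟫ := by
  obtain ⟨e, rfl⟩ : ∃ e, v = u - e := ⟨u - v, by abel⟩
  have hfield : (f - A u - B u u) - (f - A (u - e) - B (u - e) (u - e)) =
      -A e - (2 : ℝ) • B u e + B e e := by
    simp only [map_sub, LinearMap.sub_apply, hBsymm e u, two_smul]
    abel
  rw [hfield, sub_sub_cancel, inner_add_right, inner_sub_right, inner_neg_right,
    real_inner_smul_right, hBorth]
  have hA : ⟪e, A e⟫ ≤ ‖A‖ * ‖e‖ ^ 2 :=
    calc ⟪e, A e⟫ ≤ ‖e‖ * ‖A e‖ := real_inner_le_norm _ _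
      _ ≤ ‖e‖ * (‖A‖ * ‖e‖) := by gcongr; exact A.le_opNorm e
      _ = ‖A‖ * ‖e‖ ^ 2 := by ring
  have hB : ⟪e, B u e⟫ ≤ H * R * ‖e‖ ^ 2 :=
    calc ⟪e, B u e⟫ ≤ H * ‖e‖ * ‖u‖ * ‖e‖ := (le_abs_self _).trans (hBbound e u e)
      _ ≤ H * ‖e‖ * R * ‖e‖ := by gcongr
      _ = H * R * ‖e‖ ^ 2 := by ring
  linarith

/-- Lower Lipschitz bound for dissipative quadratic ODEs: if `x, y` solve
`u' = f − A u − B(u, u)` on `[0, τ]` where `B` is a symmetric bilinear map with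
`⟪u, B(u,u)⟫ = 0` and `|⟪u, B(v,w)⟫| ≤ H‖u‖‖v‖‖w‖`, and the trajectory `x` stays in the
ball of radius `R_U`, then `‖x(τ) − y(τ)‖ ≥ exp(−(‖A‖ + 2·H·R_U)·τ)·‖x(0) − y(0)‖`. -/
theorem lower_lipschitz_dissipative_ode
    {p : ℕ}
    (A : EuclideanSpace ℝ (Fin p) →L[ℝ] EuclideanSpace ℝ (Fin p))
    (B : EuclideanSpace ℝ (Fin p) →ₗ[ℝ] EuclideanSpace ℝ (Fin p) →ₗ[ℝ] EuclideanSpace ℝ (Fin p))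
    (H R_U : ℝ) (hH : 0 < H) (hRU : 0 < R_U)
    (hBsymm : ∀ u v : EuclideanSpace ℝ (Fin p), B u v = B v u)
    (hBorth : ∀ u : EuclideanSpace ℝ (Fin p), ⟪u, B u u⟫ = 0)
    (hBbound : ∀ u v w : EuclideanSpace ℝ (Fin p), |⟪u, B v w⟫| ≤ H * ‖u‖ * ‖v‖ * ‖w‖)
    (f : EuclideanSpace ℝ (Fin p))
    (τ : ℝ) (hτ : 0 ≤ τ)
    (x y : ℝ → EuclideanSpace ℝ (Fin p))
    (hx : ∀ t ∈ Set.Icc (0 : ℝ) τ,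
      HasDerivWithinAt x (f - A (x t) - B (x t) (x t)) (Set.Icc (0 : ℝ) τ) t)
    (hy : ∀ t ∈ Set.Icc (0 : ℝ) τ,
      HasDerivWithinAt y (f - A (y t) - B (y t) (y t)) (Set.Icc (0 : ℝ) τ) t)
    (hxbdd : ∀ t ∈ Set.Icc (0 : ℝ) τ, ‖x t‖ ≤ R_U) :
    Real.exp (-(‖A‖ + 2 * H * R_U) * τ) * ‖x 0 - y 0‖ ≤ ‖x τ - y τ‖ := by
  set K : ℝ := ‖A‖ + 2 * H * R_U with hK
  have hderiv : ∀ t ∈ Icc (0 : ℝ) τ, HasDerivWithinAt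
      (fun s => Real.exp (2 * K * s) * ‖x s - y s‖ ^ 2)
      (Real.exp (2 * K * t) * (2 * K) * ‖x t - y t‖ ^ 2 + Real.exp (2 * K * t) *
        (2 * ⟪x t - y t, (f - A (x t) - B (x t) (x t)) - (f - A (y t) - B (y t) (y t))⟫))
      (Icc (0 : ℝ) τ) t := by
    intro t ht
    have hexp : HasDerivAt (fun s : ℝ => Real.exp (2 * K * s))
        (Real.exp (2 * K * t) * (2 * K)) t := by
      simpa using ((hasDerivAt_id t).const_mul (2 * K)).exp
    exact hexp.hasDerivWithinAt.mul ((hx t ht).sub (hy t ht)).norm_sq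
  have hmono : MonotoneOn (fun s => Real.exp (2 * K * s) * ‖x s - y s‖ ^ 2) (Icc (0 : ℝ) τ) := by
    refine monotoneOn_of_hasDerivWithinAt_nonneg (convex_Icc 0 τ)
      (fun t ht => (hderiv t ht).continuousWithinAt)
      (fun t ht => (hderiv t (interior_subset ht)).mono interior_subset) ?_
    intro t ht
    have hge := inner_sub_vectorField_ge A B hH.le hBsymm hBorth hBbound f (x t) (y t)
      (hxbdd t (interior_subset ht))
    rw [← hK] at hge
    have hpos := Real.exp_pos (2 * K * t)
    nlinarith
  have hends : ‖x 0 - y 0‖ ^ 2 ≤ Real.exp (2 * K * τ) * ‖x τ - y τ‖ ^ 2 := by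
    simpa using hmono (left_mem_Icc.2 hτ) (right_mem_Icc.2 hτ) hτ
  have hroot : ‖x 0 - y 0‖ ≤ Real.exp (K * τ) * ‖x τ - y τ‖ := by
    refine (sq_le_sq₀ (norm_nonneg _) (by positivity)).1 ?_
    rwa [mul_pow, ← Real.exp_nat_mul, Nat.cast_ofNat, ← mul_assoc]
  rw [neg_mul, Real.exp_neg, inv_mul_le_iff₀ (Real.exp_pos _)]
  exact hroot
end

section
/- Block-sum sandwich for the accumulated observation discrepancy: for all x, y ∈ U and all t ≥ 0, setting N := ⌊t/τ⌋, one has Σ_{i=0}^{N−1} ρ_{iτ} · d(φ_{iτ}(x), φ_{iτ}(y))² ≤ ∫_0^t ‖h(s, φ_s(x)) − h(s, φ_s(y))‖² ds ≤ R · Σ_{i=0}^{N} ρ_{iτ} · d(φ_{iτ}(x), φ_{iτ}(y))² (an empty sum being 0). -/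
/-! On the block `(iτ, (i+1)τ]` the semiflow law gives `φ_{s-iτ}(φ_{iτ} x) = φ_s x`, so the
observability condition at time `iτ`, applied to the points `φ_{iτ} x, φ_{iτ} y ∈ U`, bounds the
integral of `‖h(s, φ_s x) - h(s, φ_s y)‖²` over that block. Summing over blocks bounds the
integral over `(0, Nτ]` for every `N`; since the integrand is nonnegative and integrable, the
integral over `(0, t]` lies between those over `(0, Nτ]` and `(0, (N+1)τ]` with `N = ⌊t/τ⌋`. -/

open MeasureTheory Set Finset

/-- Block-sum sandwich for the accumulated observation discrepancy: under the
observability condition with gain `ρ`, block length `τ` and constant `R`, for all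
`x, y ∈ U` and `t ≥ 0`, with `N = ⌊t/τ⌋`,
`Σ_{i=0}^{N−1} ρ_{iτ} d(φ_{iτ}x, φ_{iτ}y)² ≤ ∫_0^t ‖h(s,φ_s x) − h(s,φ_s y)‖² ds
  ≤ R Σ_{i=0}^{N} ρ_{iτ} d(φ_{iτ}x, φ_{iτ}y)²`. -/
theorem block_sum_sandwich
    {X : Type*} [MetricSpace X] {n : ℕ}
    (φ : ℝ → X → X) (hzero : φ 0 = id)
    (hadd : ∀ t s : ℝ, 0 ≤ t → 0 ≤ s → φ (t + s) = φ t ∘ φ s)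
    (U : Set X) (hU : ∀ t : ℝ, 0 ≤ t → φ t '' U ⊆ U)
    (h : ℝ → X → EuclideanSpace ℝ (Fin n))
    (hmeas : ∀ x ∈ U, Measurable fun s : ℝ => h s (φ s x))
    (hint : ∀ x ∈ U, ∀ t : ℝ, 0 ≤ t →
      IntegrableOn (fun s : ℝ => ‖h s (φ s x)‖ ^ 2) (Set.Icc 0 t))
    (τ R : ℝ) (hτ : 0 < τ) (hR : 1 < R)
    (ρ : ℝ → ℝ) (hρ : ∀ t : ℝ, 0 ≤ t → 0 < ρ t)
    (hobs : ∀ t : ℝ, 0 ≤ t → ∀ x₁ ∈ U, ∀ x₂ ∈ U,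
      ρ t * dist x₁ x₂ ^ 2 ≤
        (∫ s in Set.Ioc t (t + τ), ‖h s (φ (s - t) x₁) - h s (φ (s - t) x₂)‖ ^ 2) ∧
      (∫ s in Set.Ioc t (t + τ), ‖h s (φ (s - t) x₁) - h s (φ (s - t) x₂)‖ ^ 2) ≤
        R * (ρ t * dist x₁ x₂ ^ 2)) :
    ∀ x ∈ U, ∀ y ∈ U, ∀ t : ℝ, 0 ≤ t →
      (∑ i ∈ Finset.range ⌊t / τ⌋₊,
          ρ ((i : ℝ) * τ) * dist (φ ((i : ℝ) * τ) x) (φ ((i : ℝ) * τ) y) ^ 2) ≤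
        (∫ s in Set.Ioc (0 : ℝ) t, ‖h s (φ s x) - h s (φ s y)‖ ^ 2) ∧
      (∫ s in Set.Ioc (0 : ℝ) t, ‖h s (φ s x) - h s (φ s y)‖ ^ 2) ≤
        R * ∑ i ∈ Finset.range (⌊t / τ⌋₊ + 1),
          ρ ((i : ℝ) * τ) * dist (φ ((i : ℝ) * τ) x) (φ ((i : ℝ) * τ) y) ^ 2 := by
  intro x hx y hy t ht
  set f : ℝ → ℝ := fun s => ‖h s (φ s x) - h s (φ s y)‖ ^ 2 with hf
  have hfi : ∀ T : ℝ, IntegrableOn f (Set.Ioc 0 T) := by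
    intro T
    rcases lt_or_ge T 0 with hT | hT
    · rw [Set.Ioc_eq_empty (by linarith)]
      exact integrableOn_empty
    have key : ∀ z ∈ U, MemLp (fun s => h s (φ s z)) 2 (volume.restrict (Set.Icc 0 T)) :=
      fun z hz =>
        (memLp_two_iff_integrable_sq_norm (hmeas z hz).aestronglyMeasurable).2 (hint z hz T hT)
    have h2 := (key x hx).sub (key y hy)
    have h3 : IntegrableOn f (Set.Icc 0 T) :=
      (memLp_two_iff_integrable_sq_norm h2.aestronglyMeasurable).1 h2
    exact h3.mono_set Set.Ioc_subset_Icc_self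
  have hblock : ∀ i : ℕ,
      (∫ s in Set.Ioc ((i : ℝ) * τ) ((i : ℝ) * τ + τ),
        ‖h s (φ (s - (i : ℝ) * τ) (φ ((i : ℝ) * τ) x)) -
          h s (φ (s - (i : ℝ) * τ) (φ ((i : ℝ) * τ) y))‖ ^ 2) =
      ∫ s in Set.Ioc ((i : ℝ) * τ) ((i : ℝ) * τ + τ), f s := by
    intro i
    refine setIntegral_congr_fun measurableSet_Ioc fun s hs => ?_
    have hflow := hadd (s - (i : ℝ) * τ) ((i : ℝ) * τ) (by linarith [hs.1]) (by positivity)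
    rw [sub_add_cancel] at hflow
    simp only [hf, hflow, Function.comp_apply]
  have hsplit : ∀ N : ℕ, (∫ s in Set.Ioc 0 (((N + 1 : ℕ) : ℝ) * τ), f s) =
      (∫ s in Set.Ioc 0 ((N : ℝ) * τ), f s) +
        ∫ s in Set.Ioc ((N : ℝ) * τ) ((N : ℝ) * τ + τ), f s := by
    intro N
    have hN : 0 ≤ (N : ℝ) * τ := by positivity
    have hs : ((N + 1 : ℕ) : ℝ) * τ = (N : ℝ) * τ + τ := by push_cast; ring
    rw [hs, ← Set.Ioc_union_Ioc_eq_Ioc hN (by linarith : (N : ℝ) * τ ≤ (N : ℝ) * τ + τ)]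
    exact setIntegral_union (Set.Ioc_disjoint_Ioc_of_le le_rfl) measurableSet_Ioc (hfi _)
      ((hfi ((N : ℝ) * τ + τ)).mono_set (Set.Ioc_subset_Ioc_left hN))
  have hsum : ∀ N : ℕ,
      (∑ i ∈ Finset.range N,
          ρ ((i : ℝ) * τ) * dist (φ ((i : ℝ) * τ) x) (φ ((i : ℝ) * τ) y) ^ 2) ≤
        (∫ s in Set.Ioc 0 ((N : ℝ) * τ), f s) ∧
      (∫ s in Set.Ioc 0 ((N : ℝ) * τ), f s) ≤
        R * ∑ i ∈ Finset.range N,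
          ρ ((i : ℝ) * τ) * dist (φ ((i : ℝ) * τ) x) (φ ((i : ℝ) * τ) y) ^ 2 := by
    intro N
    induction N with
    | zero => simp
    | succ N ih =>
      have hN : 0 ≤ (N : ℝ) * τ := by positivity
      have hb := hobs _ hN _ (hU _ hN ⟨x, hx, rfl⟩) _ (hU _ hN ⟨y, hy, rfl⟩)
      rw [hblock N] at hb
      rw [hsplit N, Finset.sum_range_succ, mul_add]
      exact ⟨add_le_add ih.1 hb.1, add_le_add ih.2 hb.2⟩
  have hmono : ∀ a b : ℝ, a ≤ b → (∫ s in Set.Ioc 0 a, f s) ≤ ∫ s in Set.Ioc 0 b, f s := by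
    intro a b hab
    exact setIntegral_mono_set (hfi b) (Filter.Eventually.of_forall fun s => by positivity)
      (Set.Ioc_subset_Ioc_right hab).eventuallyLE
  have hlow : (⌊t / τ⌋₊ : ℝ) * τ ≤ t :=
    (le_div_iff₀ hτ).1 (Nat.floor_le (div_nonneg ht hτ.le))
  have hup : t ≤ ((⌊t / τ⌋₊ + 1 : ℕ) : ℝ) * τ := by
    refine (div_le_iff₀ hτ).1 ?_
    push_cast
    exact (Nat.lt_floor_add_one _).le
  exact ⟨(hsum _).1.trans (hmono _ _ hlow), (hmono _ _ hup).trans (hsum _).2⟩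
end

section
/- Entropy-integral estimate: for all real numbers c ≥ 0, p > 0 and δ > 0, ∫_0^δ ( c + p·log(1 + 1/β) )^{1/2} dβ ≤ δ·√c + 2·√(p·δ). (In the paper this is applied with c = p(N+1)·log C + log(q·b^p) to bound the Dudley entropy integral of the covering numbers N(B_a(x₀), d_{N+1}, β) ≤ q(C^{N+1} b β^{−1})^p.) -/
/-!
Since `log (1 + x) ≤ x`, the integrand is at most `√(c + p / β) ≤ √c + √p * β ^ (-1/2)`, and the
right-hand side is integrable on `(0, δ]` with integral exactly `δ * √c + 2 * √(p * δ)`.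
-/

open MeasureTheory Set

lemma entropy_integrand_le {c p β : ℝ} (hc : 0 ≤ c) (hp : 0 < p) (hβ : 0 < β) :
    Real.sqrt (c + p * Real.log (1 + 1 / β)) ≤
      Real.sqrt c + Real.sqrt p * β ^ (-(1 / 2) : ℝ) := by
  have hlog : Real.log (1 + 1 / β) ≤ 1 / β := by
    have := Real.log_le_sub_one_of_pos (show 0 < 1 + 1 / β by positivity)
    linarith
  have hpow : (β ^ (-(1 / 2) : ℝ)) ^ 2 = 1 / β := by
    rw [← Real.rpow_natCast, ← Real.rpow_mul hβ.le]
    norm_num [Real.rpow_neg_one]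
  apply Real.sqrt_le_iff.mpr
  refine ⟨by positivity, ?_⟩
  have hcross : 0 ≤ Real.sqrt c * (Real.sqrt p * β ^ (-(1 / 2) : ℝ)) := by positivity
  rw [add_sq, mul_pow, Real.sq_sqrt hc, Real.sq_sqrt hp.le, hpow]
  have := mul_le_mul_of_nonneg_left hlog hp.le
  linarith

/-- Entropy-integral estimate: for all real numbers `c ≥ 0`, `p > 0` and `δ > 0`,
`∫_0^δ (c + p·log(1 + 1/β))^{1/2} dβ ≤ δ·√c + 2·√(p·δ)`. -/
theorem entropy_integral_estimate (c p δ : ℝ) (hc : 0 ≤ c) (hp : 0 < p) (hδ : 0 < δ) :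
    (∫ β in Set.Ioc (0 : ℝ) δ, Real.sqrt (c + p * Real.log (1 + 1 / β))) ≤
      δ * Real.sqrt c + 2 * Real.sqrt (p * δ) := by
  have hint : IntervalIntegrable (fun β : ℝ => Real.sqrt p * β ^ (-(1 / 2) : ℝ)) volume 0 δ :=
    (intervalIntegral.intervalIntegrable_rpow' (by norm_num)).const_mul _
  have hconst : IntervalIntegrable (fun _ : ℝ => Real.sqrt c) volume 0 δ :=
    intervalIntegrable_const
  calc (∫ β in Set.Ioc (0 : ℝ) δ, Real.sqrt (c + p * Real.log (1 + 1 / β)))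
      ≤ ∫ β in Set.Ioc (0 : ℝ) δ, (Real.sqrt c + Real.sqrt p * β ^ (-(1 / 2) : ℝ)) := by
        apply integral_mono_of_nonneg
        · exact Filter.Eventually.of_forall fun β => Real.sqrt_nonneg _
        · exact (intervalIntegrable_iff_integrableOn_Ioc_of_le hδ.le).mp (hconst.add hint)
        · filter_upwards [ae_restrict_mem measurableSet_Ioc] with β hβ
          exact entropy_integrand_le hc hp hβ.1
    _ = δ * Real.sqrt c + 2 * Real.sqrt (p * δ) := by
        rw [← intervalIntegral.integral_of_le hδ.le, intervalIntegral.integral_add hconst hint,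
          intervalIntegral.integral_const, intervalIntegral.integral_const_mul,
          integral_rpow (Or.inl (by norm_num)), Real.sqrt_mul hp.le, Real.sqrt_eq_rpow δ]
        norm_num
        ring
end
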